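/- Let σ be a fixed-point-free row-settled Strang canonical permutation of {1,…,n} (n ≥ 2) that has no cut point c with c < n (i.e., {1,…,n} is a single section), and set m = σ⁻¹(n). Then the number of iterations of the reduction map needed to bring σ to the identity equals max over 1 ≤ i ≤ m of (σ(i) + m − 2i), and this also equals max over m < i ≤ n of (2i − m − 1 − σ(i)). -/

import Mathlib

/-- The bandwidth of a permutation `σ` of `{0,…,n-1}`: `max_i |σ(i) - i|`. -/
def bandwidth {n : ℕ} (σ : Equiv.Perm (Fin n)) : ℕ :=
  Finset.univ.sup fun i : Fin n => ((σ i : ℤ) - (i : ℤ)).natAbs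

/-- `c` is a cut point of `σ` if `σ` maps the initial segment `{0,…,c}` onto itself. -/
def IsCutPoint {n : ℕ} (σ : Equiv.Perm (Fin n)) (c : Fin n) : Prop :=
  ∀ j : Fin n, j ≤ c → σ j ≤ c

/-- Indices `i ≤ j` lie in the same section of `σ` if there is no cut point `c`
with `i ≤ c < j`. -/
def SameSection {n : ℕ} (σ : Equiv.Perm (Fin n)) (i j : Fin n) : Prop :=
  i ≤ j ∧ ∀ c : Fin n, i ≤ c → c < j → ¬ IsCutPoint σ c

/-- Unordered version of `SameSection`. -/
def InSameSection {n : ℕ} (σ : Equiv.Perm (Fin n)) (i j : Fin n) : Prop :=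
  SameSection σ i j ∨ SameSection σ j i

/-- `σ` is upper-canonical: for `i < j` with `σ(i) > i` and `σ(j) > j`, `σ(i) < σ(j)`. -/
def UpperCanonical {n : ℕ} (σ : Equiv.Perm (Fin n)) : Prop :=
  ∀ i j : Fin n, i < j → i < σ i → j < σ j → σ i < σ j

/-- `σ` is lower-canonical: for `i < j` with `σ(i) < i` and `σ(j) < j`, `σ(i) < σ(j)`. -/
def LowerCanonical {n : ℕ} (σ : Equiv.Perm (Fin n)) : Prop :=
  ∀ i j : Fin n, i < j → σ i < i → σ j < j → σ i < σ j

/-- `σ` is Strang canonical if it is both upper- and lower-canonical. -/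
def StrangCanonical {n : ℕ} (σ : Equiv.Perm (Fin n)) : Prop :=
  UpperCanonical σ ∧ LowerCanonical σ

/-- `σ` is row-settled: no indices `i < j` in the same section
with `σ(i) < i` (negative row) and `σ(j) > j` (positive row). -/
def RowSettled {n : ℕ} (σ : Equiv.Perm (Fin n)) : Prop :=
  ∀ i j : Fin n, i < j → SameSection σ i j → ¬ (σ i < i ∧ j < σ j)

/-- `σ` is settled if it is row-settled or column-settled
(column-settled means `σ⁻¹` is row-settled). -/
def Settled {n : ℕ} (σ : Equiv.Perm (Fin n)) : Prop :=
  RowSettled σ ∨ RowSettled σ⁻¹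

/-- The reducing permutation of `σ`: the product of the (pairwise disjoint)
transpositions `(i, i+1)` over all `i` with `σ(i) > i` and `σ(i+1) < i+1`. -/
def reducingPerm {n : ℕ} (σ : Equiv.Perm (Fin n)) : Equiv.Perm (Fin n) :=
  ((List.finRange n).filterMap fun i : Fin n =>
    if h : (i : ℕ) + 1 < n then
      let j : Fin n := ⟨(i : ℕ) + 1, h⟩
      if i < σ i ∧ σ j < j then some (Equiv.swap i j) else none
    else none).prod

/-- The reduction of `σ` is `σ` composed with its reducing permutation. -/
def reduction {n : ℕ} (σ : Equiv.Perm (Fin n)) : Equiv.Perm (Fin n) :=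
  σ * reducingPerm σ

/-- A bubblesort step for `σ`: a nonidentity permutation `t` that is a product of
pairwise disjoint adjacent transpositions `(i, i+1)`, each satisfying `σ(i) > σ(i+1)`. -/
def IsBubbleStep {n : ℕ} (σ t : Equiv.Perm (Fin n)) : Prop :=
  t ≠ 1 ∧ ∃ l : List (Fin n),
    l.Pairwise (fun i j => (i : ℕ) + 2 ≤ (j : ℕ)) ∧
    (∀ i ∈ l, ∃ h : (i : ℕ) + 1 < n, σ ⟨(i : ℕ) + 1, h⟩ < σ i) ∧
    t = (l.map fun i : Fin n =>
      (if h : (i : ℕ) + 1 < n then Equiv.swap i ⟨(i : ℕ) + 1, h⟩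
       else 1 : Equiv.Perm (Fin n))).prod

/-- The number of inversions of `σ`: pairs `i < j` with `σ(i) > σ(j)`. -/
def inversions {n : ℕ} (σ : Equiv.Perm (Fin n)) : ℕ :=
  (Finset.univ.filter fun p : Fin n × Fin n => p.1 < p.2 ∧ σ p.2 < σ p.1).card

/-- The cyclic shift by `s` on `{0,…,n-1}`: `i ↦ (i + s) mod n`. -/
def cyclicShift (n s : ℕ) : Equiv.Perm (Fin n) := (finRotate n) ^ s

/-- Swap condition. -/
def SwapAt {n : ℕ} (σ : Equiv.Perm (Fin n)) (i j : Fin n) : Prop :=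
  (j : ℕ) = i + 1 ∧ i < σ i ∧ σ j < j

/-- The optional transposition at `i`. -/
def optSwap {n : ℕ} (σ : Equiv.Perm (Fin n)) (i : Fin n) : Option (Equiv.Perm (Fin n)) :=
    if h : (i : ℕ) + 1 < n then
      let j : Fin n := ⟨(i : ℕ) + 1, h⟩
      if i < σ i ∧ σ j < j then some (Equiv.swap i j) else none
    else none

lemma optSwap_cases {n : ℕ} (σ : Equiv.Perm (Fin n)) (i : Fin n) :
    (optSwap σ i = none ∧ ∀ j, ¬ SwapAt σ i j) ∨
    (∃ j, SwapAt σ i j ∧ optSwap σ i = some (Equiv.swap i j)) := by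
  unfold optSwap
  by_cases h : (i : ℕ) + 1 < n
  · by_cases h2 : i < σ i ∧ σ ⟨i + 1, h⟩ < ⟨i + 1, h⟩
    · right
      refine ⟨⟨i + 1, h⟩, ⟨rfl, h2.1, h2.2⟩, ?_⟩
      simp only [h, dite_true, h2, and_self, if_true]
    · left
      refine ⟨by simp only [h, dite_true, h2, if_false], ?_⟩
      rintro j ⟨h3, h4, h5⟩
      have : j = ⟨i + 1, h⟩ := Fin.ext h3
      subst this
      exact h2 ⟨h4, h5⟩
  · left
    refine ⟨by simp only [h, dite_false], ?_⟩
    rintro j ⟨h3, h4, h5⟩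
    have := j.isLt
    omega

lemma list_fix {n : ℕ} (σ : Equiv.Perm (Fin n)) (x : Fin n) (l : List (Fin n))
    (h : ∀ i ∈ l, ∀ j, SwapAt σ i j → x ≠ i ∧ x ≠ j) :
    (l.filterMap (optSwap σ)).prod x = x := by
  induction l with
  | nil => simp
  | cons a l ih =>
    have ih' := ih (fun i hi => h i (List.mem_cons_of_mem _ hi))
    rcases optSwap_cases σ a with ⟨h1, _⟩ | ⟨j, h1, h2⟩
    · rw [List.filterMap_cons_none h1]; exact ih'
    · rw [List.filterMap_cons_some h2, List.prod_cons, Equiv.Perm.mul_apply, ih']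
      obtain ⟨h3, h4⟩ := h a List.mem_cons_self j h1
      exact Equiv.swap_apply_of_ne_of_ne h3 h4

lemma SwapAt.sep {n : ℕ} {σ : Equiv.Perm (Fin n)} {i j i' j' : Fin n}
    (h : SwapAt σ i j) (h' : SwapAt σ i' j') (hne : i ≠ i') :
    i ≠ j' ∧ j ≠ i' ∧ j ≠ j' := by
  obtain ⟨h1, h2, h3⟩ := h
  obtain ⟨h4, h5, h6⟩ := h'
  refine ⟨?_, ?_, ?_⟩
  · rintro rfl; exact lt_asymm h2 h6
  · rintro rfl; exact lt_asymm h3 h5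
  · rintro rfl; apply hne; apply Fin.ext; omega

lemma list_swap {n : ℕ} (σ : Equiv.Perm (Fin n)) (i j : Fin n) (hij : SwapAt σ i j)
    (l : List (Fin n)) (hl : l.Nodup) (hi : i ∈ l) :
    (l.filterMap (optSwap σ)).prod i = j ∧ (l.filterMap (optSwap σ)).prod j = i := by
  induction l with
  | nil => simp at hi
  | cons a l ih =>
    rw [List.nodup_cons] at hl
    rcases List.mem_cons.1 hi with rfl | hi'
    · have hfi : (l.filterMap (optSwap σ)).prod i = i := by
        apply list_fix
        intro i' hi' j' h'
        have hne : i ≠ i' := by rintro rfl; exact hl.1 hi'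
        exact ⟨hne, (hij.sep h' hne).1⟩
      have hfj : (l.filterMap (optSwap σ)).prod j = j := by
        apply list_fix
        intro i' hi' j' h'
        have hne : i ≠ i' := by rintro rfl; exact hl.1 hi'
        exact (hij.sep h' hne).2
      rcases optSwap_cases σ i with ⟨_, h2⟩ | ⟨j', h1, h2⟩
      · exact absurd hij (h2 j)
      · have : j' = j := by
          apply Fin.ext; rw [h1.1, hij.1]
        subst this
        rw [List.filterMap_cons_some h2, List.prod_cons, Equiv.Perm.mul_apply,
          Equiv.Perm.mul_apply, hfi, hfj]
        simp
    · obtain ⟨e1, e2⟩ := ih hl.2 hi'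
      rcases optSwap_cases σ a with ⟨h1, _⟩ | ⟨j', h1, h2⟩
      · rw [List.filterMap_cons_none h1]; exact ⟨e1, e2⟩
      · have hne : i ≠ a := by rintro rfl; exact hl.1 hi'
        obtain ⟨s1, s2, s3⟩ := hij.sep h1 hne
        rw [List.filterMap_cons_some h2, List.prod_cons, Equiv.Perm.mul_apply,
          Equiv.Perm.mul_apply, e1, e2]
        exact ⟨Equiv.swap_apply_of_ne_of_ne s2 s3, Equiv.swap_apply_of_ne_of_ne hne s1⟩

lemma reducing_swap {n : ℕ} (σ : Equiv.Perm (Fin n)) (i j : Fin n) (hij : SwapAt σ i j) :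
    (reducingPerm σ)⁻¹ i = j ∧ (reducingPerm σ)⁻¹ j = i := by
  have := list_swap σ i j hij (List.finRange n) (List.nodup_finRange n) (List.mem_finRange i)
  obtain ⟨h1, h2⟩ := this
  rw [Equiv.Perm.inv_eq_iff_eq, Equiv.Perm.inv_eq_iff_eq]
  exact ⟨h2.symm, h1.symm⟩

lemma reducing_fix {n : ℕ} (σ : Equiv.Perm (Fin n)) (x : Fin n)
    (h1 : ∀ j, ¬ SwapAt σ x j) (h2 : ∀ i, ¬ SwapAt σ i x) :
    (reducingPerm σ)⁻¹ x = x := by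
  rw [Equiv.Perm.inv_eq_iff_eq]
  symm
  apply list_fix σ x (List.finRange n)
  intro i _ j hs
  constructor
  · rintro rfl; exact h1 j hs
  · rintro rfl; exact h2 i hs

lemma perm_up {n : ℕ} (τ : Equiv.Perm (Fin n)) (c p : Fin n) (hp : p ≤ c) (hp' : c < τ p) :
    ∃ x, c < x ∧ τ x ≤ c := by
  by_contra! hcon
  have himg : (Finset.Ioi c).image τ = Finset.Ioi c := by
    apply Finset.eq_of_subset_of_card_le
    · intro y hy
      obtain ⟨x, hx, rfl⟩ := Finset.mem_image.1 hy
      exact Finset.mem_Ioi.2 (hcon x (Finset.mem_Ioi.1 hx))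
    · rw [Finset.card_image_of_injective _ τ.injective]
  have : τ p ∈ (Finset.Ioi c).image τ := by rw [himg]; exact Finset.mem_Ioi.2 hp'
  obtain ⟨x, hx, hxp⟩ := Finset.mem_image.1 this
  have := τ.injective hxp
  subst this
  exact absurd (Finset.mem_Ioi.1 hx) (not_lt.2 hp)

lemma perm_down {n : ℕ} (τ : Equiv.Perm (Fin n)) (c p : Fin n) (hp : c ≤ p) (hp' : τ p < c) :
    ∃ x, x < c ∧ c ≤ τ x := by
  by_contra! hcon
  have himg : (Finset.Iio c).image τ = Finset.Iio c := by
    apply Finset.eq_of_subset_of_card_le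
    · intro y hy
      obtain ⟨x, hx, rfl⟩ := Finset.mem_image.1 hy
      exact Finset.mem_Iio.2 (hcon x (Finset.mem_Iio.1 hx))
    · rw [Finset.card_image_of_injective _ τ.injective]
  have : τ p ∈ (Finset.Iio c).image τ := by rw [himg]; exact Finset.mem_Iio.2 hp'
  obtain ⟨x, hx, hxp⟩ := Finset.mem_image.1 this
  have := τ.injective hxp
  subst this
  exact absurd (Finset.mem_Iio.1 hx) (not_lt.2 hp)

lemma perm_le_eq_one {n : ℕ} (τ : Equiv.Perm (Fin n)) (h : ∀ x, τ x ≤ x) : τ = 1 := by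
  have hs : ∑ x, ((τ x : Fin n) : ℕ) = ∑ x : Fin n, (x : ℕ) :=
    Equiv.sum_comp τ (fun x : Fin n => (x : ℕ))
  have := (Finset.sum_eq_sum_iff_of_le (s := Finset.univ)
    (f := fun x => ((τ x : Fin n) : ℕ)) (g := fun x : Fin n => (x : ℕ))
    (fun x _ => h x)).1 hs
  ext x
  exact this x (Finset.mem_univ x)

lemma perm_ge_eq_one {n : ℕ} (τ : Equiv.Perm (Fin n)) (h : ∀ x, x ≤ τ x) : τ = 1 := by
  have hs : ∑ x : Fin n, (x : ℕ) = ∑ x, ((τ x : Fin n) : ℕ) :=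
    (Equiv.sum_comp τ (fun x : Fin n => (x : ℕ))).symm
  have := (Finset.sum_eq_sum_iff_of_le (s := Finset.univ)
    (g := fun x => ((τ x : Fin n) : ℕ)) (f := fun x : Fin n => (x : ℕ))
    (fun x _ => h x)).1 hs
  ext x
  exact (this x (Finset.mem_univ x)).symm

/-- Position at time `t` of the value that starts in row `i`. -/
def posN (m t i s : ℕ) : ℕ :=
  if i ≤ m then i + min (t - (m - i)) (s - i) else i - min (t - (i - m - 1)) (i - s)

/-- Structural hypotheses. -/
structure Good {n : ℕ} (σ : Equiv.Perm (Fin n)) (m : Fin n) : Prop where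
  pos : ∀ i, i ≤ m → i < σ i
  neg : ∀ i, m < i → σ i < i
  mpos : ∀ i j, i < j → j ≤ m → σ i < σ j
  mneg : ∀ i j, m < i → i < j → σ i < σ j

lemma Good.posgap {n : ℕ} {σ : Equiv.Perm (Fin n)} {m : Fin n} (g : Good σ m) (i j : Fin n)
    (hij : i ≤ j) (hj : j ≤ m) : (σ i : ℕ) + j ≤ σ j + i := by
  obtain ⟨i, hi⟩ := i
  obtain ⟨j, hjn⟩ := j
  simp only [Fin.mk_le_mk] at hij
  induction j, hij using Nat.le_induction with
  | base => exact le_rfl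
  | succ k hk ih =>
    have hkn : k < n := by omega
    have h1 := ih hkn (le_trans (by simp) hj)
    have h2 := g.mpos ⟨k, hkn⟩ ⟨k + 1, hjn⟩ (by simp) hj
    rw [Fin.lt_def] at h2
    simp only at h1 ⊢
    omega

lemma Good.neggap {n : ℕ} {σ : Equiv.Perm (Fin n)} {m : Fin n} (g : Good σ m) (i j : Fin n)
    (hij : i ≤ j) (hi : m < i) : (σ i : ℕ) + j ≤ σ j + i := by
  obtain ⟨i, hin⟩ := i
  obtain ⟨j, hjn⟩ := j
  simp only [Fin.mk_le_mk] at hij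
  induction j, hij using Nat.le_induction with
  | base => exact le_rfl
  | succ k hk ih =>
    have hkn : k < n := by omega
    have h1 := ih hkn
    have h2 := g.mneg ⟨k, hkn⟩ ⟨k + 1, hjn⟩ (lt_of_lt_of_le hi (by simpa using hk)) (by simp)
    rw [Fin.lt_def] at h2
    simp only at h1 ⊢
    omega

/-- The invariant. -/
def RowInv {n : ℕ} (σ : Equiv.Perm (Fin n)) (m : Fin n) (t : ℕ) (τ : Equiv.Perm (Fin n)) : Prop :=
  ∀ i, ((τ⁻¹ (σ i) : Fin n) : ℕ) = posN m t i (σ i)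

lemma RowInv.row {n : ℕ} {σ τ : Equiv.Perm (Fin n)} {m : Fin n} {t : ℕ} (h : RowInv σ m t τ)
    (x : Fin n) : ∃ i, τ x = σ i ∧ (x : ℕ) = posN m t i (σ i) := by
  refine ⟨σ⁻¹ (τ x), by simp, ?_⟩
  have := h (σ⁻¹ (τ x))
  simpa using this

lemma posN_le {m t i s : ℕ} (h : i ≤ m) (h2 : i < s) : 
    posN m t i s = i + min (t - (m - i)) (s - i) ∧ posN m t i s ≤ s := by
  unfold posN; rw [if_pos h]; omega

lemma posN_ge {m t i s : ℕ} (h : m < i) (h2 : s < i) : 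
    posN m t i s = i - min (t - (i - m - 1)) (i - s) ∧ s ≤ posN m t i s := by
  unfold posN; rw [if_neg (by omega)]; omega

lemma RowInv.step {n : ℕ} {σ τ : Equiv.Perm (Fin n)} {m : Fin n} {t : ℕ} (g : Good σ m)
    (h : RowInv σ m t τ) : RowInv σ m (t + 1) (reduction τ) := by
  intro k
  obtain ⟨x, hx⟩ : ∃ x, τ⁻¹ (σ k) = x := ⟨_, rfl⟩
  have hxp : (x : ℕ) = posN m t k (σ k) := by rw [← hx]; exact h k
  have hτx : τ x = σ k := by rw [← hx]; simp
  have hr : (reduction τ)⁻¹ (σ k) = (reducingPerm τ)⁻¹ x := by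
    unfold reduction; rw [mul_inv_rev, Equiv.Perm.mul_apply, hx]
  rw [hr]
  have hcls : ∀ y i, τ y = σ i → (y : ℕ) = posN m t i (σ i) := by
    intro y i hy
    rw [← h i, ← hy]; simp
  rcases le_or_gt k m with hk | hk
  · have hkp := g.pos k hk
    have hk' : (k : ℕ) ≤ m := hk
    have hkp' : (k : ℕ) < σ k := hkp
    have e0 := posN_le (t := t) hk' hkp'
    have e1 := posN_le (t := t + 1) hk' hkp'
    rcases Nat.lt_or_ge t (m - k) with hns | hst
    · -- not started
      have hxk : x = k := by apply Fin.ext; omega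
      rw [reducing_fix τ x, e1.1]
      · omega
      · rintro j ⟨hj, _, hj2⟩
        have hjm : (j : ℕ) ≤ m := by omega
        have hjp := g.pos j hjm
        have e2 := posN_le (t := t) hjm hjp
        have e3 := h j
        have : τ⁻¹ (σ j) = j := by apply Fin.ext; omega
        rw [Equiv.Perm.inv_eq_iff_eq] at this
        rw [← this] at hj2
        exact lt_asymm hj2 hjp
      · rintro i ⟨_, _, h2⟩
        rw [hτx, hxk] at h2
        exact lt_asymm h2 hkp
    · rcases Nat.lt_or_ge (t - (m - k)) (σ k - k) with hlt | hfin
      · -- moving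
        have hxlt : (x : ℕ) < σ k := by omega
        have hyn : (x : ℕ) + 1 < n := by have := (σ k).isLt; omega
        obtain ⟨y, hy⟩ : ∃ y : Fin n, (y : ℕ) = x + 1 := ⟨⟨x + 1, hyn⟩, rfl⟩
        obtain ⟨i, hyi, hyp⟩ := h.row y
        have him : m < i := by
          by_contra hcon
          have him : i ≤ m := not_lt.1 hcon
          have e2 := posN_le (t := t) (show (i : ℕ) ≤ m from him) (g.pos i him)
          rcases lt_trichotomy (k : ℕ) i with hki | hki | hki
          · have := g.posgap k i hki.le him
            omega
          · have : k = i := Fin.ext hki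
            subst this
            omega
          · have := g.posgap i k hki.le hk
            omega
        have hin := g.neg i him
        have e2 := posN_ge (t := t) (show (m : ℕ) < i from him) hin
        have hylt : τ y < y := by
          rw [hyi]
          rcases lt_or_eq_of_le (show (σ i : ℕ) ≤ y by omega) with h3 | h3
          · exact h3
          · exfalso
            have hiy : σ i = y := Fin.ext h3
            have hki : k ≠ i := by rintro rfl; exact absurd him (not_lt.2 hk)
            have hne : (σ k : ℕ) ≠ σ i := fun hh => hki (σ.injective (Fin.ext hh))
            obtain ⟨z, hz1, hz2⟩ := perm_up τ y x (by rw [Fin.le_def]; omega)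
              (by rw [hτx, Fin.lt_def]; omega)
            obtain ⟨w, hw, hwp⟩ := h.row z
            have hz1' : (y : ℕ) < z := hz1
            have hz2' : (σ w : ℕ) ≤ y := by rw [← hw]; exact hz2
            rcases le_or_gt w m with hwm | hwm
            · have e4 := posN_le (t := t) (show (w : ℕ) ≤ m from hwm) (g.pos w hwm)
              omega
            · have e4 := posN_ge (t := t) (show (m : ℕ) < w from hwm) (g.neg w hwm)
              rcases lt_trichotomy (w : ℕ) i with hwi | hwi | hwi
              · have := g.neggap w i hwi.le hwm
                omega
              · have : w = i := Fin.ext hwi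
                subst this
                omega
              · have := g.mneg i w him hwi
                rw [Fin.lt_def] at this
                omega
        rw [(reducing_swap τ x y ⟨hy, by rw [hτx]; exact hxlt, hylt⟩).1, e1.1]
        omega
      · have hxk : σ k = x := by apply Fin.ext; omega
        rw [hxk] at hτx
        rw [reducing_fix τ x]
        · omega
        · rintro j ⟨_, h2, _⟩
          rw [hτx] at h2; exact lt_irrefl _ h2
        · rintro j ⟨_, _, h2⟩
          rw [hτx] at h2; exact lt_irrefl _ h2
  · have hkp := g.neg k hk
    have hk' : (m : ℕ) < k := hk
    have hkp' : (σ k : ℕ) < k := hkp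
    have e0 := posN_ge (t := t) hk' hkp'
    have e1 := posN_ge (t := t + 1) hk' hkp'
    rcases Nat.lt_or_ge t (k - m - 1) with hns | hst
    · have hxk : x = k := by apply Fin.ext; omega
      rw [reducing_fix τ x, e1.1]
      · omega
      · rintro i ⟨_, h2, _⟩
        rw [hτx, hxk] at h2
        exact lt_asymm h2 hkp
      · rintro j ⟨hj, hj2, _⟩
        have hjm : (m : ℕ) < j := by rw [hxk] at hj; omega
        have hjp := g.neg j hjm
        have e2 := posN_ge (t := t) hjm hjp
        have e3 := h j
        rw [hxk] at hj
        have : τ⁻¹ (σ j) = j := by apply Fin.ext; omega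
        rw [Equiv.Perm.inv_eq_iff_eq] at this
        rw [← this] at hj2
        exact lt_asymm hj2 hjp
    · rcases Nat.lt_or_ge (t - (k - m - 1)) (k - σ k) with hlt | hfin
      · have hxlt : (σ k : ℕ) < x := by omega
        obtain ⟨y, hy⟩ : ∃ y : Fin n, (x : ℕ) = y + 1 :=
          ⟨⟨x - 1, by have := x.isLt; omega⟩, by simp only; omega⟩
        obtain ⟨i, hyi, hyp⟩ := h.row y
        have him : i ≤ m := by
          by_contra hcon
          have him : m < i := not_le.1 hcon
          have e2 := posN_ge (t := t) (show (m : ℕ) < i from him) (g.neg i him)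
          rcases lt_trichotomy (k : ℕ) i with hki | hki | hki
          · have := g.neggap k i hki.le hk
            omega
          · have : k = i := Fin.ext hki
            subst this
            omega
          · have := g.neggap i k hki.le him
            omega
        have hin := g.pos i him
        have e2 := posN_le (t := t) (show (i : ℕ) ≤ m from him) hin
        have hylt : y < τ y := by
          rw [hyi]
          rcases lt_or_eq_of_le (show (y : ℕ) ≤ σ i by omega) with h3 | h3
          · exact h3
          · exfalso
            have hiy : σ i = y := Fin.ext h3.symm
            have hki : k ≠ i := by rintro rfl; exact absurd him (not_le.2 hk)
            have hne : (σ k : ℕ) ≠ σ i := fun hh => hki (σ.injective (Fin.ext hh))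
            obtain ⟨z, hz1, hz2⟩ := perm_down τ y x (by rw [Fin.le_def]; omega)
              (by rw [hτx, Fin.lt_def]; omega)
            obtain ⟨w, hw, hwp⟩ := h.row z
            have hz1' : (z : ℕ) < y := hz1
            have hz2' : (y : ℕ) ≤ σ w := by rw [← hw]; exact hz2
            rcases le_or_gt w m with hwm | hwm
            · have e4 := posN_le (t := t) (show (w : ℕ) ≤ m from hwm) (g.pos w hwm)
              rcases lt_trichotomy (w : ℕ) i with hwi | hwi | hwi
              · have := g.mpos w i hwi him
                rw [Fin.lt_def] at this
                omega
              · have : w = i := Fin.ext hwi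
                subst this
                omega
              · have := g.posgap i w hwi.le hwm
                omega
            · have e4 := posN_ge (t := t) (show (m : ℕ) < w from hwm) (g.neg w hwm)
              omega
        rw [(reducing_swap τ y x ⟨hy, hylt, by rw [hτx]; exact hxlt⟩).2, e1.1]
        omega
      · have hxk : σ k = x := by apply Fin.ext; omega
        rw [hxk] at hτx
        rw [reducing_fix τ x]
        · omega
        · rintro j ⟨_, h2, _⟩
          rw [hτx] at h2; exact lt_irrefl _ h2
        · rintro j ⟨_, _, h2⟩
          rw [hτx] at h2; exact lt_irrefl _ h2

lemma inv_iter {n : ℕ} {σ : Equiv.Perm (Fin n)} {m : Fin n} (g : Good σ m) (t : ℕ) :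
    RowInv σ m t (reduction^[t] σ) := by
  induction t with
  | zero =>
    intro i
    have hs : σ⁻¹ (σ i) = i := by simp
    simp only [Function.iterate_zero, id_eq, hs]
    unfold posN
    split_ifs <;> omega
  | succ t ih =>
    rw [Function.iterate_succ_apply']
    exact ih.step g

lemma RowInv.eq_one_pos {n : ℕ} {σ τ : Equiv.Perm (Fin n)} {m : Fin n} {t : ℕ} (g : Good σ m)
    (h : RowInv σ m t τ) (hA : ∀ i, i ≤ m → posN m t i (σ i) = σ i) : τ = 1 := by
  apply perm_le_eq_one
  intro x
  obtain ⟨i, hi, hx⟩ := h.row x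
  rw [hi, Fin.le_def]
  rcases le_or_gt i m with him | him
  · rw [hx, hA i him]
  · have := posN_ge (t := t) (show (m : ℕ) < i from him) (g.neg i him)
    omega

lemma RowInv.eq_one_neg {n : ℕ} {σ τ : Equiv.Perm (Fin n)} {m : Fin n} {t : ℕ} (g : Good σ m)
    (h : RowInv σ m t τ) (hA : ∀ i, m < i → posN m t i (σ i) = σ i) : τ = 1 := by
  apply perm_ge_eq_one
  intro x
  obtain ⟨i, hi, hx⟩ := h.row x
  rw [hi, Fin.le_def]
  rcases le_or_gt i m with him | him
  · have := posN_le (t := t) (show (i : ℕ) ≤ m from him) (g.pos i him)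
    omega
  · rw [hx, hA i him]

lemma good_of {n : ℕ} (σ : Equiv.Perm (Fin n))
    (hfree : ∀ i : Fin n, σ i ≠ i)
    (hrs : RowSettled σ) (hsc : StrangCanonical σ)
    (hcut : ∀ c : Fin n, IsCutPoint σ c → (c : ℕ) = n - 1)
    (m : Fin n) (hm' : (σ m : ℕ) = n - 1) : Good σ m := by
  have hmm : m < σ m := by
    have h1 : (m : ℕ) ≠ σ m := fun h => hfree m (Fin.ext h.symm)
    rw [Fin.lt_def]; have := m.isLt; omega
  have hpos : ∀ i, i ≤ m → i < σ i := by
    intro i him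
    rcases him.eq_or_lt with rfl | him
    · exact hmm
    · by_contra hcon
      have hlt : σ i < i := lt_of_le_of_ne (not_lt.1 hcon) (hfree i)
      refine hrs i m him ⟨him.le, ?_⟩ ⟨hlt, hmm⟩
      intro c _ hcm hc
      have := hcut c hc
      have h2 : (c : ℕ) < m := hcm
      have := m.isLt
      omega
  have hneg : ∀ i, m < i → σ i < i := by
    intro i him
    by_contra hcon
    have hlt : i < σ i := lt_of_le_of_ne (not_lt.1 hcon) (hfree i).symm
    have h1 : (σ m : ℕ) < σ i := hsc.1 m i him hmm hlt
    have := (σ i).isLt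
    omega
  exact ⟨hpos, hneg, fun i j hij hj => hsc.1 i j hij (hpos i (hij.le.trans hj)) (hpos j hj),
    fun i j hi hij => hsc.2 i j hij (hneg i hi) (hneg j (hi.trans hij))⟩

/-- Exact count of reduction iterations for a fixed-point-free row-settled
Strang canonical single-section permutation.  Indices are 0-based; the 1-based quantities of
the informal statement are `i + 1`, `m + 1`, `σ(i) + 1`, so the two maxima read
`(σ(i)+1) + (m+1) - 2(i+1)` over `i ≤ m` and `2(i+1) - (m+1) - 1 - (σ(i)+1)` over `i > m`. -/
theorem stmt_8 (n : ℕ) (hn : 2 ≤ n) (σ : Equiv.Perm (Fin n))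
    (hfree : ∀ i : Fin n, σ i ≠ i)
    (hrs : RowSettled σ) (hsc : StrangCanonical σ)
    (hcut : ∀ c : Fin n, IsCutPoint σ c → (c : ℕ) = n - 1)
    (m : Fin n) (hm : σ m = ⟨n - 1, by omega⟩)
    (q : ℕ) (hq : reduction^[q] σ = 1) (hqmin : ∀ k < q, reduction^[k] σ ≠ 1) :
    IsGreatest {v : ℤ | ∃ i : Fin n, i ≤ m ∧
        v = ((σ i : ℤ) + 1) + ((m : ℤ) + 1) - 2 * ((i : ℤ) + 1)} (q : ℤ) ∧
    IsGreatest {v : ℤ | ∃ i : Fin n, m < i ∧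
        v = 2 * ((i : ℤ) + 1) - ((m : ℤ) + 1) - 1 - ((σ i : ℤ) + 1)} (q : ℤ) := by
  have g := good_of σ hfree hrs hsc hcut m (by rw [hm])
  have hI := inv_iter g
  have hq0 : q ≠ 0 := by
    rintro rfl
    apply hfree m
    simp only [Function.iterate_zero, id_eq] at hq
    rw [hq]; rfl
  have hfin : ∀ i : Fin n, posN m q i (σ i) = σ i := by
    intro i
    have := hI q i
    rw [hq] at this
    simpa using this.symm
  have hne := hqmin (q - 1) (by omega)
  have ub1 : ∀ i : Fin n, i ≤ m → (σ i : ℤ) + m - 2 * i ≤ q := by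
    intro i hi
    have h1 : (i : ℕ) ≤ m := hi
    have h2 : (i : ℕ) < σ i := g.pos i hi
    have h3 := (posN_le (t := q) h1 h2).1
    have h4 := hfin i
    omega
  have ub2 : ∀ i : Fin n, m < i → 2 * (i : ℤ) - m - 1 - σ i ≤ q := by
    intro i hi
    have h1 : (m : ℕ) < i := hi
    have h2 : (σ i : ℕ) < i := g.neg i hi
    have h3 := (posN_ge (t := q) h1 h2).1
    have h4 := hfin i
    omega
  refine ⟨⟨?_, ?_⟩, ⟨?_, ?_⟩⟩
  · by_contra hcon
    apply hne
    apply (hI (q - 1)).eq_one_pos g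
    intro i hi
    have h0 := ub1 i hi
    have h1 : (i : ℕ) ≤ m := hi
    have h2 : (i : ℕ) < σ i := g.pos i hi
    have h3 := (posN_le (t := q - 1) h1 h2).1
    have h5 : (q : ℤ) ≠ (σ i : ℤ) + m - 2 * i := fun h => hcon ⟨i, hi, by rw [h]; ring⟩
    omega
  · rintro v ⟨i, hi, rfl⟩
    have h0 := ub1 i hi
    linarith
  · by_contra hcon
    apply hne
    apply (hI (q - 1)).eq_one_neg g
    intro i hi
    have h0 := ub2 i hi
    have h1 : (m : ℕ) < i := hi
    have h2 : (σ i : ℕ) < i := g.neg i hi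
    have h3 := (posN_ge (t := q - 1) h1 h2).1
    have h5 : (q : ℤ) ≠ 2 * (i : ℤ) - m - 1 - σ i := fun h => hcon ⟨i, hi, by rw [h]; ring⟩
    omega
  · rintro v ⟨i, hi, rfl⟩
    have h0 := ub2 i hi
    linarith
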